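/- Let a < b be real numbers, α, β ∈ (0,1) and γ ∈ [0,1]. If f and g are absolutely continuous on [a,b], then ∫_a^b g(x)·(C D_γ^{α,β} f)(x) dx = γ·[f(x)·(xI_b^{1−α} g)(x)]_{x=a}^{x=b} − (1−γ)·[f(x)·(aI_x^{1−β} g)(x)]_{x=a}^{x=b} + ∫_a^b f(x)·(D_{1−γ}^{β,α} g)(x) dx, where the Riemann–Liouville derivatives of g appearing in D_{1−γ}^{β,α} g exist almost everywhere. -/

import Mathlib

open MeasureTheory Set Real

noncomputable section

/-- Left Riemann–Liouville fractional integral `(ₐIₓ^α f)(x)`. -/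
def leftRLI (a α : ℝ) (f : ℝ → ℝ) (x : ℝ) : ℝ :=
  (1 / Real.Gamma α) * ∫ t in a..x, (x - t) ^ (α - 1) * f t

/-- Right Riemann–Liouville fractional integral `(ₓI_b^α f)(x)`. -/
def rightRLI (b α : ℝ) (f : ℝ → ℝ) (x : ℝ) : ℝ :=
  (1 / Real.Gamma α) * ∫ t in x..b, (t - x) ^ (α - 1) * f t

/-- A function is absolutely continuous on `[a, b]` iff it is the integral of its
(almost everywhere defined) derivative. -/
def AbsolutelyContinuousOn (f : ℝ → ℝ) (a b : ℝ) : Prop :=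
  IntervalIntegrable (deriv f) volume a b ∧
    ∀ x ∈ Icc a b, f x = f a + ∫ t in a..x, deriv f t

/-- Left Caputo fractional derivative `(ᶜₐDₓ^α f)(x)`. -/
def caputoLeft (a α : ℝ) (f : ℝ → ℝ) (x : ℝ) : ℝ :=
  (1 / Real.Gamma (1 - α)) * ∫ t in a..x, (x - t) ^ (-α) * deriv f t

/-- Right Caputo fractional derivative `(ᶜₓD_b^α f)(x)`. -/
def caputoRight (b α : ℝ) (f : ℝ → ℝ) (x : ℝ) : ℝ :=
  -(1 / Real.Gamma (1 - α)) * ∫ t in x..b, (t - x) ^ (-α) * deriv f t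

/-- Left Riemann–Liouville fractional derivative `(ₐDₓ^α g)(x) = d/dx (ₐIₓ^{1-α} g)(x)`. -/
def rlLeftD (a α : ℝ) (g : ℝ → ℝ) (x : ℝ) : ℝ :=
  deriv (leftRLI a (1 - α) g) x

/-- Right Riemann–Liouville fractional derivative `(ₓD_b^α g)(x) = -d/dx (ₓI_b^{1-α} g)(x)`. -/
def rlRightD (b α : ℝ) (g : ℝ → ℝ) (x : ℝ) : ℝ :=
  -deriv (rightRLI b (1 - α) g) x

/-- Combined Caputo fractional derivative `ᶜD_γ^{α,β} f = γ ᶜₐDₓ^α f + (1-γ) ᶜₓD_b^β f`. -/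
def combCaputo (a b α β γ : ℝ) (f : ℝ → ℝ) (x : ℝ) : ℝ :=
  γ * caputoLeft a α f x + (1 - γ) * caputoRight b β f x

/-- Combined Riemann–Liouville derivative `D_{1-γ}^{β,α} g = (1-γ) ₐDₓ^β g + γ ₓD_b^α g`. -/
def combRL (a b α β γ : ℝ) (g : ℝ → ℝ) (x : ℝ) : ℝ :=
  (1 - γ) * rlLeftD a β g x + γ * rlRightD b α g x

/-- Componentwise combined Caputo derivative of a vector-valued function. -/
def combCaputoVec (a b α β γ : ℝ) {N : ℕ} (y : ℝ → Fin N → ℝ) (x : ℝ) : Fin N → ℝ :=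
  fun i => combCaputo a b α β γ (fun t => y t i) x

/-- The class `𝐃` of trajectories: each component absolutely continuous on `[a,b]` and the
combined Caputo derivative exists and is continuous on `[a,b]`. -/
def memD (a b α β γ : ℝ) {N : ℕ} (y : ℝ → Fin N → ℝ) : Prop :=
  (∀ i, AbsolutelyContinuousOn (fun t => y t i) a b) ∧
    ∀ i, ContinuousOn (fun x => combCaputo a b α β γ (fun t => y t i) x) (Icc a b)

/-- The norm `‖y‖_{1,∞} = max_{[a,b]} ‖y(x)‖ + max_{[a,b]} ‖ᶜD_γ^{α,β} y(x)‖`. -/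
def norm1inf (a b α β γ : ℝ) {N : ℕ} (y : ℝ → Fin N → ℝ) : ℝ :=
  sSup ((fun x => ‖y x‖) '' Icc a b) +
    sSup ((fun x => ‖combCaputoVec a b α β γ y x‖) '' Icc a b)

/-- Partial derivative of a Lagrangian `L(x, y, v)` w.r.t. the `i`-th component of `y`. -/
def pdY {N : ℕ} (L : ℝ → (Fin N → ℝ) → (Fin N → ℝ) → ℝ) (i : Fin N) (x : ℝ)
    (u v : Fin N → ℝ) : ℝ :=
  deriv (fun s => L x (Function.update u i s) v) (u i)

/-- Partial derivative of a Lagrangian `L(x, y, v)` w.r.t. the `i`-th component of `v`. -/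
def pdV {N : ℕ} (L : ℝ → (Fin N → ℝ) → (Fin N → ℝ) → ℝ) (i : Fin N) (x : ℝ)
    (u v : Fin N → ℝ) : ℝ :=
  deriv (fun s => L x u (Function.update v i s)) (v i)

/-!
By Fubini's theorem on the triangle `a < s < t ≤ b`, the left and right Riemann–Liouville integrals
of a given order are adjoint to each other on `L¹ × L^∞`. Since the Caputo derivatives are, up to
sign, Riemann–Liouville integrals of `f'`, adjointness moves the fractional integral from `f'` to
`g`, and classical integration by parts for absolutely continuous functions finishes the proof as
soon as the fractional integral of `g` is absolutely continuous. For absolutely continuous `g` this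
follows from
`(ₐIₓ^μ g)(x) = g(a) (x - a)^μ / Γ(μ + 1) + ∫_a^x (ₐI_s^μ g')(s) ds`.
-/

section Triangle

/-- The triangle `a < s < t ≤ b`, the domain of `(s, t)` in the iterated integrals
`∫ s in a..b, ∫ t in s..b` and `∫ t in a..b, ∫ s in a..t`. -/
def triangle (a b : ℝ) : Set (ℝ × ℝ) :=
  {p | a < p.1 ∧ p.1 < p.2 ∧ p.2 ≤ b}

variable {a b : ℝ}

theorem measurableSet_triangle : MeasurableSet (triangle a b) :=
  (measurableSet_lt measurable_const measurable_fst).inter <|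
    (measurableSet_lt measurable_fst measurable_snd).inter <|
      measurableSet_le measurable_snd measurable_const

theorem restrict_triangle_le_prod_restrict_Ioc :
    volume.restrict (triangle a b) ≤
      (volume.restrict (Ioc a b)).prod (volume.restrict (Ioc a b)) := by
  rw [Measure.prod_restrict, ← Measure.volume_eq_prod]
  refine Measure.restrict_mono (fun p hp => ?_) le_rfl
  exact ⟨⟨hp.1, hp.2.1.le.trans hp.2.2⟩, hp.1.trans hp.2.1, hp.2.2⟩

section Fubini

variable {E : Type*} [NormedAddCommGroup E] [NormedSpace ℝ E] {K : ℝ → ℝ → E}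

theorem integral_indicator_triangle_right (s : ℝ) :
    ∫ t, (triangle a b).indicator (Function.uncurry K) (s, t) =
      (Ioc a b).indicator (fun s => ∫ t in s..b, K s t) s := by
  by_cases hs : s ∈ Ioc a b
  · have hsection : (fun t => (triangle a b).indicator (Function.uncurry K) (s, t)) =
        (Ioc s b).indicator (K s) := by
      ext t
      simp [indicator_apply, triangle, hs.1]
    rw [hsection, integral_indicator measurableSet_Ioc, indicator_of_mem hs,
      intervalIntegral.integral_of_le hs.2]
  · have hempty : ∀ t, (s, t) ∉ triangle a b := fun t h => hs ⟨h.1, h.2.1.le.trans h.2.2⟩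
    simp [hs, hempty]

theorem integral_indicator_triangle_left (t : ℝ) :
    ∫ s, (triangle a b).indicator (Function.uncurry K) (s, t) =
      (Ioc a b).indicator (fun t => ∫ s in a..t, K s t) t := by
  by_cases ht : t ∈ Ioc a b
  · have hsection : (fun s => (triangle a b).indicator (Function.uncurry K) (s, t)) =
        (Ioo a t).indicator fun s => K s t := by
      ext s
      simp [indicator_apply, triangle, ht.2]
    rw [hsection, integral_indicator measurableSet_Ioo, indicator_of_mem ht,
      intervalIntegral.integral_of_le ht.1.le, integral_Ioc_eq_integral_Ioo]
  · have hempty : ∀ s, (s, t) ∉ triangle a b := fun s h => ht ⟨h.1.trans h.2.1, h.2.2⟩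
    simp [ht, hempty]

theorem integral_integral_swap_triangle (hab : a ≤ b)
    (hK : IntegrableOn (Function.uncurry K) (triangle a b)) :
    ∫ s in a..b, ∫ t in s..b, K s t = ∫ t in a..b, ∫ s in a..t, K s t := by
  have h := integral_integral_swap
    (f := fun s t => (triangle a b).indicator (Function.uncurry K) (s, t))
    (hK.integrable_indicator measurableSet_triangle)
  simp_rw [integral_indicator_triangle_right, integral_indicator_triangle_left,
    integral_indicator measurableSet_Ioc] at h
  rwa [intervalIntegral.integral_of_le hab, intervalIntegral.integral_of_le hab]

theorem intervalIntegrable_integral_triangle_right (hab : a ≤ b)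
    (hK : IntegrableOn (Function.uncurry K) (triangle a b)) :
    IntervalIntegrable (fun s => ∫ t in s..b, K s t) volume a b := by
  have h := (hK.integrable_indicator measurableSet_triangle).integral_prod_left
  simp_rw [integral_indicator_triangle_right] at h
  rwa [intervalIntegrable_iff_integrableOn_Ioc_of_le hab,
    ← integrable_indicator_iff measurableSet_Ioc]

theorem intervalIntegrable_integral_triangle_left (hab : a ≤ b)
    (hK : IntegrableOn (Function.uncurry K) (triangle a b)) :
    IntervalIntegrable (fun t => ∫ s in a..t, K s t) volume a b := by
  have h := (hK.integrable_indicator measurableSet_triangle).integral_prod_right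
  simp_rw [integral_indicator_triangle_left] at h
  rwa [intervalIntegrable_iff_integrableOn_Ioc_of_le hab,
    ← integrable_indicator_iff measurableSet_Ioc]

end Fubini

variable {φ ψ k : ℝ → ℝ}

theorem integral_mul_integral_swap (hab : a ≤ b) (hφ : IntervalIntegrable φ volume a b)
    (hψ : IntervalIntegrable ψ volume a b) :
    ∫ t in a..b, ψ t * ∫ s in a..t, φ s = ∫ s in a..b, (∫ t in s..b, ψ t) * φ s := by
  rw [intervalIntegrable_iff_integrableOn_Ioc_of_le hab] at hφ hψ
  have hprod : IntegrableOn (Function.uncurry fun s t => ψ t * φ s) (triangle a b) :=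
    ((hφ.mul_prod hψ).mono_measure restrict_triangle_le_prod_restrict_Ioc).congr <|
      .of_forall fun p => mul_comm _ _
  simpa using (integral_integral_swap_triangle hab hprod).symm

theorem integrableOn_triangle_sub_mul_fst (hk : IntegrableOn k (Ioc 0 (b - a)))
    (hφ : IntegrableOn φ (Ioc a b)) :
    IntegrableOn (fun p => k (p.2 - p.1) * φ p.1) (triangle a b) := by
  have hconv := ((hφ.integrable_indicator measurableSet_Ioc).convolution_integrand
    (ContinuousLinearMap.mul ℝ ℝ) (hk.integrable_indicator measurableSet_Ioc)).swap
  refine hconv.integrableOn.congr_fun (fun p ⟨has, hst, htb⟩ => ?_) measurableSet_triangle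
  have hs : p.1 ∈ Ioc a b := ⟨has, hst.le.trans htb⟩
  have hu : p.2 - p.1 ∈ Ioc 0 (b - a) := ⟨by linarith, by linarith⟩
  simp [indicator_of_mem hs, indicator_of_mem hu, mul_comm]

theorem integrableOn_triangle_sub_mul_snd (hk : IntegrableOn k (Ioc 0 (b - a)))
    (hψ : IntegrableOn ψ (Ioc a b)) :
    IntegrableOn (fun p => k (p.2 - p.1) * ψ p.2) (triangle a b) := by
  have hconv := (hψ.integrable_indicator measurableSet_Ioc).convolution_integrand
    (ContinuousLinearMap.mul ℝ ℝ) (hk.integrable_indicator measurableSet_Ioc).comp_neg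
  refine hconv.integrableOn.congr_fun (fun p ⟨has, hst, htb⟩ => ?_) measurableSet_triangle
  have ht : p.2 ∈ Ioc a b := ⟨has.trans hst, htb⟩
  have hu : p.2 - p.1 ∈ Ioc 0 (b - a) := ⟨by linarith, by linarith⟩
  simp [indicator_of_mem ht, indicator_of_mem hu, mul_comm]

theorem memLp_fst_restrict_triangle {p : ENNReal} (hφ : MemLp φ p (volume.restrict (Ioc a b))) :
    MemLp (fun z => φ z.1) p (volume.restrict (triangle a b)) :=
  (hφ.comp_fst _).mono_measure restrict_triangle_le_prod_restrict_Ioc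

theorem memLp_snd_restrict_triangle {p : ENNReal} (hψ : MemLp ψ p (volume.restrict (Ioc a b))) :
    MemLp (fun z => ψ z.2) p (volume.restrict (triangle a b)) :=
  (hψ.comp_snd _).mono_measure restrict_triangle_le_prod_restrict_Ioc

end Triangle

section AbsoluteContinuity

theorem memLp_top_of_continuousOn_uIcc {E : Type*} [NormedAddCommGroup E] {f : ℝ → E} {a b : ℝ}
    (hf : ContinuousOn f (uIcc a b)) : MemLp f ⊤ (volume.restrict (uIoc a b)) := by
  obtain ⟨B, hB⟩ := isCompact_uIcc.exists_bound_of_continuousOn hf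
  exact memLp_top_of_bound
    ((hf.mono uIoc_subset_uIcc).aestronglyMeasurable measurableSet_uIoc) B
    (ae_restrict_of_forall_mem measurableSet_uIoc fun x hx => hB x (uIoc_subset_uIcc hx))

theorem absolutelyContinuousOnInterval_congr {X : Type*} [PseudoMetricSpace X] {f g : ℝ → X}
    {a b : ℝ} (hf : AbsolutelyContinuousOnInterval f a b) (h : EqOn f g (uIcc a b)) :
    AbsolutelyContinuousOnInterval g a b := by
  refine Filter.Tendsto.congr' (Filter.eventually_inf_principal.2 (.of_forall fun E hE => ?_)) hf
  exact Finset.sum_congr rfl fun i hi => by rw [h (hE.1 i hi).1, h (hE.1 i hi).2]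

variable {F φ f : ℝ → ℝ} {a b c C : ℝ}

theorem absolutelyContinuousOnInterval_of_eq_add_integral (hφ : IntervalIntegrable φ volume a b)
    (hc : c ∈ uIcc a b) (hF : ∀ x ∈ uIcc a b, F x = C + ∫ t in c..x, φ t) :
    AbsolutelyContinuousOnInterval F a b :=
  have hconst : AbsolutelyContinuousOnInterval (fun _ => C) a b :=
    (LipschitzWith.const C).lipschitzOnWith.absolutelyContinuousOnInterval
  absolutelyContinuousOnInterval_congr
    (hconst.add (hφ.absolutelyContinuousOnInterval_intervalIntegral hc))
    fun x hx => (hF x hx).symm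

theorem eq_add_integral_deriv_of_absolutelyContinuousOnInterval
    (hf : AbsolutelyContinuousOnInterval f a b) {x : ℝ} (hx : x ∈ uIcc a b) :
    f x = f a + ∫ t in a..x, deriv f t := by
  rw [(hf.mono (uIcc_subset_uIcc left_mem_uIcc hx)).integral_deriv_eq_sub, add_sub_cancel]

theorem absolutelyContinuousOn_iff_absolutelyContinuousOnInterval (hab : a ≤ b) :
    AbsolutelyContinuousOn f a b ↔ AbsolutelyContinuousOnInterval f a b := by
  refine ⟨fun hf => ?_, fun hf => ⟨hf.intervalIntegrable_deriv, fun x hx => ?_⟩⟩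
  · exact absolutelyContinuousOnInterval_of_eq_add_integral hf.1 left_mem_uIcc
      (uIcc_of_le hab ▸ hf.2)
  · exact eq_add_integral_deriv_of_absolutelyContinuousOnInterval hf (Icc_subset_uIcc hx)

theorem absolutelyContinuousOnInterval_comp_neg (hf : AbsolutelyContinuousOnInterval f a b) :
    AbsolutelyContinuousOnInterval (fun x => f (-x)) (-a) (-b) := by
  have hderiv : IntervalIntegrable (fun t => -deriv f (-t)) volume (-a) (-b) :=
    ((IntervalIntegrable.iff_comp_neg).1 hf.intervalIntegrable_deriv).neg
  refine absolutelyContinuousOnInterval_of_eq_add_integral (C := f a) hderiv left_mem_uIcc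
    fun x hx => ?_
  have hx' : -x ∈ uIcc a b := by simpa using neg_mem_neg.2 hx
  rw [intervalIntegral.integral_neg, intervalIntegral.integral_comp_neg, neg_neg,
    ← intervalIntegral.integral_symm,
    eq_add_integral_deriv_of_absolutelyContinuousOnInterval hf hx']

end AbsoluteContinuity

section RiemannLiouville

variable {a b μ : ℝ} {f φ ψ : ℝ → ℝ}

theorem intervalIntegrable_const_sub_rpow (hμ : 0 < μ) (x a b : ℝ) :
    IntervalIntegrable (fun t => (x - t) ^ (μ - 1)) volume a b := by
  simpa using (intervalIntegral.intervalIntegrable_rpow' (a := x - a) (b := x - b)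
    (r := μ - 1) (by linarith)).comp_sub_left x

theorem intervalIntegrable_sub_const_rpow (hμ : 0 < μ) (x a b : ℝ) :
    IntervalIntegrable (fun t => (t - x) ^ (μ - 1)) volume a b := by
  simpa using (intervalIntegral.intervalIntegrable_rpow' (a := a - x) (b := b - x)
    (r := μ - 1) (by linarith)).comp_sub_right x

theorem integral_const_sub_rpow (hμ : 0 < μ) (s x : ℝ) :
    ∫ t in s..x, (x - t) ^ (μ - 1) = (x - s) ^ μ / μ := by
  rw [intervalIntegral.integral_comp_sub_left (fun u : ℝ => u ^ (μ - 1)),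
    integral_rpow (.inl (by linarith))]
  simp [hμ.ne']

theorem integral_sub_const_rpow (hμ : 0 < μ) (x t : ℝ) :
    ∫ s in x..t, (s - x) ^ (μ - 1) = (t - x) ^ μ / μ := by
  rw [intervalIntegral.integral_comp_sub_right (fun u : ℝ => u ^ (μ - 1)),
    integral_rpow (.inl (by linarith))]
  simp [hμ.ne']

theorem leftRLI_comp_neg (b μ : ℝ) (f : ℝ → ℝ) (x : ℝ) :
    leftRLI (-b) μ (fun t => f (-t)) (-x) = rightRLI b μ f x := by
  have h := intervalIntegral.integral_comp_neg (a := -b) (b := -x)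
    (fun t => (t - x) ^ (μ - 1) * f t)
  simp only [neg_neg] at h
  rw [leftRLI, rightRLI, ← h]
  simp only [sub_eq_add_neg, add_comm]

theorem rightRLI_one (hμ : 0 < μ) (b x : ℝ) :
    rightRLI b μ (fun _ => 1) x = (b - x) ^ μ / Real.Gamma (μ + 1) := by
  simp only [rightRLI, mul_one, integral_sub_const_rpow hμ, Real.Gamma_add_one hμ.ne']
  field_simp

theorem integrableOn_rpow_sub_one (hμ : 0 < μ) (c : ℝ) :
    IntegrableOn (fun u : ℝ => u ^ (μ - 1)) (Ioc 0 c) :=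
  (intervalIntegral.intervalIntegrable_rpow' (by linarith)).1

theorem intervalIntegrable_leftRLI (hμ : 0 < μ) (hab : a ≤ b)
    (hφ : IntervalIntegrable φ volume a b) :
    IntervalIntegrable (leftRLI a μ φ) volume a b :=
  (intervalIntegrable_integral_triangle_left (K := fun s t => (t - s) ^ (μ - 1) * φ s) hab
    (integrableOn_triangle_sub_mul_fst (integrableOn_rpow_sub_one hμ _) hφ.1)).const_mul _

theorem intervalIntegrable_rightRLI (hμ : 0 < μ) (hab : a ≤ b)
    (hφ : IntervalIntegrable φ volume a b) :
    IntervalIntegrable (rightRLI b μ φ) volume a b :=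
  (intervalIntegrable_integral_triangle_right (K := fun s t => (t - s) ^ (μ - 1) * φ t) hab
    (integrableOn_triangle_sub_mul_snd (integrableOn_rpow_sub_one hμ _) hφ.1)).const_mul _

theorem integral_mul_leftRLI_of_integrableOn (hab : a ≤ b)
    (h : IntegrableOn (fun p => (p.2 - p.1) ^ (μ - 1) * φ p.1 * ψ p.2) (triangle a b)) :
    ∫ x in a..b, ψ x * leftRLI a μ φ x = ∫ x in a..b, φ x * rightRLI b μ ψ x := by
  have hswap := integral_integral_swap_triangle
    (K := fun s t => (t - s) ^ (μ - 1) * φ s * ψ t) hab h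
  have hleft : ∀ t, ψ t * leftRLI a μ φ t =
      1 / Real.Gamma μ * ∫ s in a..t, (t - s) ^ (μ - 1) * φ s * ψ t := fun t => by
    rw [intervalIntegral.integral_mul_const, leftRLI]
    ring
  have hright : ∀ s, φ s * rightRLI b μ ψ s =
      1 / Real.Gamma μ * ∫ t in s..b, (t - s) ^ (μ - 1) * φ s * ψ t := fun s => by
    simp_rw [mul_right_comm _ (φ s), intervalIntegral.integral_mul_const, rightRLI]
    ring
  simp_rw [hleft, hright, intervalIntegral.integral_const_mul, hswap]

theorem integral_mul_leftRLI (hμ : 0 < μ) (hab : a ≤ b) (hφ : IntervalIntegrable φ volume a b)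
    (hψ : MemLp ψ ⊤ (volume.restrict (Ioc a b))) :
    ∫ x in a..b, ψ x * leftRLI a μ φ x = ∫ x in a..b, φ x * rightRLI b μ ψ x :=
  integral_mul_leftRLI_of_integrableOn hab <|
    (integrableOn_triangle_sub_mul_fst (integrableOn_rpow_sub_one hμ _) hφ.1).mul_of_top_left
      (memLp_snd_restrict_triangle hψ)

theorem integral_mul_rightRLI (hμ : 0 < μ) (hab : a ≤ b) (hφ : IntervalIntegrable φ volume a b)
    (hψ : MemLp ψ ⊤ (volume.restrict (Ioc a b))) :
    ∫ x in a..b, ψ x * rightRLI b μ φ x = ∫ x in a..b, φ x * leftRLI a μ ψ x := by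
  have h := (integrableOn_triangle_sub_mul_snd (integrableOn_rpow_sub_one hμ _)
    hφ.1).mul_of_top_left (memLp_fst_restrict_triangle hψ)
  exact (integral_mul_leftRLI_of_integrableOn hab
    (h.congr (.of_forall fun p => mul_right_comm _ _ _))).symm

theorem integral_leftRLI (hμ : 0 < μ) (hab : a ≤ b) (hφ : IntervalIntegrable φ volume a b) :
    ∫ x in a..b, leftRLI a μ φ x = leftRLI a (μ + 1) φ b := by
  have h := integral_mul_leftRLI hμ hab hφ (memLp_top_const 1)
  simp_rw [one_mul, rightRLI_one hμ] at h
  rw [h, leftRLI, add_sub_cancel_right, ← intervalIntegral.integral_const_mul]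
  congr 1 with x
  ring

theorem leftRLI_eq_add_leftRLI_deriv (hμ : 0 < μ) (hab : a ≤ b)
    (hf : AbsolutelyContinuousOnInterval f a b) :
    leftRLI a μ f b =
      f a * (b - a) ^ μ / Real.Gamma (μ + 1) + leftRLI a (μ + 1) (deriv f) b := by
  have hkernel := intervalIntegrable_const_sub_rpow hμ b a b
  have hprimitive : ContinuousOn (fun t => ∫ s in a..t, deriv f s) (uIcc a b) :=
    (hf.intervalIntegrable_deriv.absolutelyContinuousOnInterval_intervalIntegral
      left_mem_uIcc).continuousOn
  calc leftRLI a μ f b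
      = 1 / Real.Gamma μ * ∫ t in a..b, (b - t) ^ (μ - 1) * (f a + ∫ s in a..t, deriv f s) := by
        rw [leftRLI]
        congr 1
        refine intervalIntegral.integral_congr fun t ht => ?_
        rw [← eq_add_integral_deriv_of_absolutelyContinuousOnInterval hf ht]
    _ = 1 / Real.Gamma μ *
          ((b - a) ^ μ / μ * f a + ∫ s in a..b, (b - s) ^ μ / μ * deriv f s) := by
        simp_rw [mul_add]
        rw [intervalIntegral.integral_add (hkernel.mul_const _)
            (hkernel.mul_continuousOn hprimitive),
          intervalIntegral.integral_mul_const,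
          integral_mul_integral_swap hab hf.intervalIntegrable_deriv hkernel]
        simp_rw [integral_const_sub_rpow hμ]
        ring
    _ = _ := by
        simp_rw [leftRLI, add_sub_cancel_right, div_mul_eq_mul_div, intervalIntegral.integral_div,
          Real.Gamma_add_one hμ.ne']
        field_simp

theorem absolutelyContinuousOnInterval_leftRLI (hμ : 0 < μ) (hab : a ≤ b)
    (hf : AbsolutelyContinuousOnInterval f a b) :
    AbsolutelyContinuousOnInterval (leftRLI a μ f) a b := by
  have hpower := intervalIntegrable_sub_const_rpow hμ a a b
  have hderiv := hf.intervalIntegrable_deriv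
  refine absolutelyContinuousOnInterval_of_eq_add_integral (C := 0) (c := a)
    ((hpower.const_mul (f a / Real.Gamma μ)).add (intervalIntegrable_leftRLI hμ hab hderiv))
    left_mem_uIcc fun x hx => ?_
  have hsub : uIcc a x ⊆ uIcc a b := uIcc_subset_uIcc left_mem_uIcc hx
  have hax : a ≤ x := (uIcc_of_le hab ▸ hx).1
  rw [leftRLI_eq_add_leftRLI_deriv hμ hax (hf.mono hsub), zero_add,
    intervalIntegral.integral_add ((hpower.mono_set hsub).const_mul _)
      (intervalIntegrable_leftRLI hμ hax (hderiv.mono_set hsub)),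
    integral_leftRLI hμ hax (hderiv.mono_set hsub), intervalIntegral.integral_const_mul,
    integral_sub_const_rpow hμ, Real.Gamma_add_one hμ.ne']
  field_simp

theorem absolutelyContinuousOnInterval_rightRLI (hμ : 0 < μ) (hab : a ≤ b)
    (hf : AbsolutelyContinuousOnInterval f a b) :
    AbsolutelyContinuousOnInterval (rightRLI b μ f) a b := by
  have h := absolutelyContinuousOnInterval_leftRLI hμ (neg_le_neg hab)
    (absolutelyContinuousOnInterval_comp_neg hf).symm
  simpa [leftRLI_comp_neg] using (absolutelyContinuousOnInterval_comp_neg h).symm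

end RiemannLiouville

section Caputo

variable {a b α β γ : ℝ} {f g : ℝ → ℝ}

theorem caputoLeft_eq_leftRLI_deriv : caputoLeft a α f = leftRLI a (1 - α) (deriv f) := by
  ext x
  rw [caputoLeft, leftRLI, sub_sub_cancel_left]

theorem caputoRight_eq_neg_rightRLI_deriv :
    caputoRight b α f = -rightRLI b (1 - α) (deriv f) := by
  ext x
  rw [caputoRight, Pi.neg_apply, rightRLI, sub_sub_cancel_left, neg_mul]

theorem intervalIntegrable_caputoLeft (hα : α < 1) (hab : a ≤ b)
    (hf : AbsolutelyContinuousOnInterval f a b) :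
    IntervalIntegrable (caputoLeft a α f) volume a b := by
  rw [caputoLeft_eq_leftRLI_deriv]
  exact intervalIntegrable_leftRLI (sub_pos.2 hα) hab hf.intervalIntegrable_deriv

theorem intervalIntegrable_caputoRight (hα : α < 1) (hab : a ≤ b)
    (hf : AbsolutelyContinuousOnInterval f a b) :
    IntervalIntegrable (caputoRight b α f) volume a b := by
  rw [caputoRight_eq_neg_rightRLI_deriv]
  exact (intervalIntegrable_rightRLI (sub_pos.2 hα) hab hf.intervalIntegrable_deriv).neg

theorem integral_mul_caputoLeft (hα : α < 1) (hab : a ≤ b)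
    (hf : AbsolutelyContinuousOnInterval f a b) (hg : MemLp g ⊤ (volume.restrict (Ioc a b)))
    (hI : AbsolutelyContinuousOnInterval (rightRLI b (1 - α) g) a b) :
    ∫ x in a..b, g x * caputoLeft a α f x =
      f b * rightRLI b (1 - α) g b - f a * rightRLI b (1 - α) g a +
        ∫ x in a..b, f x * rlRightD b α g x := by
  simp_rw [rlRightD, mul_neg, intervalIntegral.integral_neg, caputoLeft_eq_leftRLI_deriv]
  rw [integral_mul_leftRLI (sub_pos.2 hα) hab hf.intervalIntegrable_deriv hg,
    hf.integral_mul_deriv_eq_deriv_mul hI]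
  ring

theorem integral_mul_caputoRight (hα : α < 1) (hab : a ≤ b)
    (hf : AbsolutelyContinuousOnInterval f a b) (hg : MemLp g ⊤ (volume.restrict (Ioc a b)))
    (hI : AbsolutelyContinuousOnInterval (leftRLI a (1 - α) g) a b) :
    ∫ x in a..b, g x * caputoRight b α f x =
      -(f b * leftRLI a (1 - α) g b - f a * leftRLI a (1 - α) g a) +
        ∫ x in a..b, f x * rlLeftD a α g x := by
  simp_rw [rlLeftD, caputoRight_eq_neg_rightRLI_deriv, Pi.neg_apply, mul_neg,
    intervalIntegral.integral_neg]
  rw [integral_mul_rightRLI (sub_pos.2 hα) hab hf.intervalIntegrable_deriv hg,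
    hf.integral_mul_deriv_eq_deriv_mul hI]
  ring

theorem integral_mul_combCaputo (hα : α < 1) (hβ : β < 1) (hab : a ≤ b)
    (hf : AbsolutelyContinuousOnInterval f a b) (hg : MemLp g ⊤ (volume.restrict (Ioc a b))) :
    ∫ x in a..b, g x * combCaputo a b α β γ f x =
      γ * (∫ x in a..b, g x * caputoLeft a α f x) +
        (1 - γ) * ∫ x in a..b, g x * caputoRight b β f x := by
  have hmul : ∀ {h : ℝ → ℝ}, IntervalIntegrable h volume a b →
      IntervalIntegrable (fun x => g x * h x) volume a b := fun hh =>
    (intervalIntegrable_iff_integrableOn_Ioc_of_le hab).2 (hh.1.mul_of_top_right hg)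
  simp_rw [combCaputo, mul_add, mul_left_comm (g _)]
  rw [intervalIntegral.integral_add
      ((hmul (intervalIntegrable_caputoLeft hα hab hf)).const_mul γ)
      ((hmul (intervalIntegrable_caputoRight hβ hab hf)).const_mul (1 - γ)),
    intervalIntegral.integral_const_mul, intervalIntegral.integral_const_mul]

theorem integral_mul_combRL (hf : ContinuousOn f (uIcc a b))
    (hleft : IntervalIntegrable (rlLeftD a β g) volume a b)
    (hright : IntervalIntegrable (rlRightD b α g) volume a b) :
    ∫ x in a..b, f x * combRL a b α β γ g x =
      (1 - γ) * (∫ x in a..b, f x * rlLeftD a β g x) +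
        γ * ∫ x in a..b, f x * rlRightD b α g x := by
  simp_rw [combRL, mul_add, mul_left_comm (f _)]
  rw [intervalIntegral.integral_add
      ((hleft.continuousOn_mul hf).const_mul (1 - γ))
      ((hright.continuousOn_mul hf).const_mul γ),
    intervalIntegral.integral_const_mul, intervalIntegral.integral_const_mul]

theorem combCaputo_integration_by_parts_general (hα : α < 1) (hβ : β < 1) (hab : a ≤ b)
    (hf : AbsolutelyContinuousOnInterval f a b) (hg : MemLp g ⊤ (volume.restrict (Ioc a b)))
    (hleft : AbsolutelyContinuousOnInterval (leftRLI a (1 - β) g) a b)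
    (hright : AbsolutelyContinuousOnInterval (rightRLI b (1 - α) g) a b) :
    ∫ x in a..b, g x * combCaputo a b α β γ f x =
      γ * (f b * rightRLI b (1 - α) g b - f a * rightRLI b (1 - α) g a) -
        (1 - γ) * (f b * leftRLI a (1 - β) g b - f a * leftRLI a (1 - β) g a) +
        ∫ x in a..b, f x * combRL a b α β γ g x := by
  rw [integral_mul_combCaputo hα hβ hab hf hg, integral_mul_caputoLeft hα hab hf hg hright,
    integral_mul_caputoRight hβ hab hf hg hleft,
    integral_mul_combRL hf.continuousOn hleft.intervalIntegrable_deriv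
      hright.intervalIntegrable_deriv.neg]
  ring

end Caputo

/-- Fractional integration by parts for the combined Caputo derivative `ᶜD_γ^{α,β}`:
`∫_a^b g (ᶜD_γ^{α,β} f) dx = γ [f · ₓI_b^{1-α} g]_a^b - (1-γ) [f · ₐIₓ^{1-β} g]_a^b
  + ∫_a^b f (D_{1-γ}^{β,α} g) dx`. -/
theorem combCaputo_integration_by_parts
    (a b α β γ : ℝ) (hab : a < b)
    (hα : α ∈ Ioo (0 : ℝ) 1) (hβ : β ∈ Ioo (0 : ℝ) 1) (hγ : γ ∈ Icc (0 : ℝ) 1)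
    (f g : ℝ → ℝ)
    (hf : AbsolutelyContinuousOn f a b) (hg : AbsolutelyContinuousOn g a b) :
    ∫ x in a..b, g x * combCaputo a b α β γ f x =
      γ * (f b * rightRLI b (1 - α) g b - f a * rightRLI b (1 - α) g a) -
        (1 - γ) * (f b * leftRLI a (1 - β) g b - f a * leftRLI a (1 - β) g a) +
        ∫ x in a..b, f x * combRL a b α β γ g x := by
  have hf' := (absolutelyContinuousOn_iff_absolutelyContinuousOnInterval hab.le).1 hf
  have hg' := (absolutelyContinuousOn_iff_absolutelyContinuousOnInterval hab.le).1 hg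
  exact combCaputo_integration_by_parts_general hα.2 hβ.2 hab.le hf'
    (uIoc_of_le hab.le ▸ memLp_top_of_continuousOn_uIcc hg'.continuousOn)
    (absolutelyContinuousOnInterval_leftRLI (sub_pos.2 hβ.2) hab.le hg')
    (absolutelyContinuousOnInterval_rightRLI (sub_pos.2 hα.2) hab.le hg')
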